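/- arXiv:2604.25739 — 3 statements merged into one kernel-verified Lean document; each statement's English description precedes it below -/
import Mathlib

section
/- Let D ≥ 3 be an integer and λ = (D−2)/2. Let Ḡ be a finite simple graph with vertex set V̄, |V̄| ≥ 4, and edge weights ν : E(Ḡ) → (0, ∞) such that every vertex v satisfies Σ_{e ∋ v} ν_e = D/λ. Assume Ḡ is not primitive: there exists a partition V̄ = V₁ ⊔ V₂ with |V₁| ≥ 2 and |V₂| ≥ 2 such that Σ_{e ∈ E(V₁, V₂)} ν_e ≤ D/λ. Then for every choice of pairwise distinct vertices v, a, b ∈ V̄ and every unit vector e ∈ ℝ^D, the function (x_u)_{u ∈ V̄∖{v,a,b}} ↦ ∏_{{u,w} ∈ E(Ḡ), v ∉ {u,w}} ‖x_u − x_w‖^{−2λν_{uw}} (with x_a = 0, x_b = e) is not Lebesgue integrable on (ℝ^D)^{V̄∖{v,a,b}}. -/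
open MeasureTheory

/-! Power counting. Let `S` be one side of the cut, with the deleted vertex `v` on the other side.
As all weighted degrees equal `D / λ`, the bound on the cut gives the edges inside `S` total
exponent at least `D * (#S - 1)`, and the edges avoiding `v` but not inside `S` total exponent at
most `D * #(Sᶜ \ {v})`. If `S` contains at most one of the two fixed vertices, let its vertices
approach one of them, to distance `r → 0`: the integrand grows at least like `r ^ (-D * (#S - 1))`
on a region of volume `~ r ^ (D * (#S - 1))`. If `S` contains both, let the vertices outside `S`
escape to distance `r → ∞`: the integrand decays at most like `r ^ (-D * #(Sᶜ \ {v}))` on a region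
of volume `~ r ^ (D * #(Sᶜ \ {v}))`. So every scale `r` contributes a fixed positive amount, whereas
each point lies in no region of sufficiently extreme scale: dominated convergence excludes
integrability. -/

section Shells

open Filter Module Topology
open scoped Pointwise

lemma not_integrable_of_le_setIntegral {α κ : Type*} [MeasurableSpace α] {μ : Measure α}
    {l : Filter κ} [l.NeBot] [l.IsCountablyGenerated] {A : κ → Set α} {f : α → ℝ} {c : ℝ}
    (hA : ∀ i, MeasurableSet (A i)) (hescape : ∀ x, ∀ᶠ i in l, x ∉ A i) (hc : 0 < c)
    (hle : ∀ᶠ i in l, c ≤ ∫ x in A i, f x ∂μ) : ¬ Integrable f μ := by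
  intro hf
  have hlim : Tendsto (fun i ↦ ∫ x, (A i).indicator f x ∂μ) l (𝓝 (∫ _, (0 : ℝ) ∂μ)) := by
    refine tendsto_integral_filter_of_dominated_convergence (fun x ↦ ‖f x‖)
      (.of_forall fun i ↦ hf.aestronglyMeasurable.indicator (hA i))
      (.of_forall fun i ↦ .of_forall fun x ↦ norm_indicator_le_norm_self _ _) hf.norm
      (.of_forall fun x ↦ tendsto_const_nhds.congr' ?_)
    filter_upwards [hescape x] with i hi
    rw [Set.indicator_of_notMem hi]
  simp only [integral_indicator (hA _), integral_zero] at hlim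
  exact hc.not_ge (ge_of_tendsto hlim hle)

variable {E : Type*} [NormedAddCommGroup E] {ι : Type*}

/-- The open spherical shell of inner radius `r` and outer radius `2 * r` around the origin. -/
def sphericalShell (E : Type*) [NormedAddCommGroup E] (r : ℝ) : Set E :=
  Metric.ball 0 (2 * r) \ Metric.closedBall 0 r

lemma mem_sphericalShell {r : ℝ} {x : E} : x ∈ sphericalShell E r ↔ ‖x‖ < 2 * r ∧ r < ‖x‖ := by
  simp [sphericalShell]

lemma isOpen_sphericalShell (r : ℝ) : IsOpen (sphericalShell E r) :=
  Metric.isOpen_ball.sdiff Metric.isClosed_closedBall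

lemma sphericalShell_eq_smul [NormedSpace ℝ E] {r : ℝ} (hr : 0 < r) :
    sphericalShell E r = r • sphericalShell E 1 := by
  rw [sphericalShell, sphericalShell, Set.smul_set_sdiff₀ hr.ne', smul_ball hr.ne',
    smul_closedBall' hr.ne', smul_zero, Real.norm_of_nonneg hr.le, mul_one, mul_one, mul_comm]

lemma sphericalShell_nonempty [NormedSpace ℝ E] [Nontrivial E] {r : ℝ} (hr : 0 < r) :
    (sphericalShell E r).Nonempty := by
  obtain ⟨x, hx⟩ := exists_norm_eq E (show 0 ≤ 3 / 2 * r by positivity)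
  exact ⟨x, mem_sphericalShell.2 (by constructor <;> linarith)⟩

lemma eventually_nhdsGT_zero_notMem_sphericalShell (x : E) :
    ∀ᶠ r in 𝓝[>] (0 : ℝ), x ∉ sphericalShell E r := by
  rcases eq_or_ne x 0 with rfl | hx
  · filter_upwards [self_mem_nhdsWithin] with r (hr : 0 < r) hxr
    exact (mem_sphericalShell.1 hxr).2.not_gt (by simpa using hr)
  · have hx2 : 0 < ‖x‖ / 2 := by positivity
    filter_upwards [nhdsWithin_le_nhds (Iio_mem_nhds hx2)] with r (hr : r < ‖x‖ / 2) hxr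
    linarith [(mem_sphericalShell.1 hxr).1]

lemma eventually_atTop_notMem_sphericalShell (x : E) :
    ∀ᶠ r : ℝ in atTop, x ∉ sphericalShell E r := by
  filter_upwards [eventually_ge_atTop ‖x‖] with r hr hxr
  exact (mem_sphericalShell.1 hxr).2.not_ge hr

variable [DecidableEq ι]

/-- The configurations whose coordinates in `T` live at scale `r`, the others being bounded: the
regions on which power counting detects divergences. -/
def shellBox (E : Type*) [NormedAddCommGroup E] (T : Finset ι) (r : ℝ) : Set (ι → E) :=
  Set.univ.pi fun i ↦ if i ∈ T then sphericalShell E r else Metric.ball 0 1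

lemma mem_sphericalShell_of_mem_shellBox {T : Finset ι} {r : ℝ} {z : ι → E}
    (hz : z ∈ shellBox E T r) {i : ι} (hi : i ∈ T) : z i ∈ sphericalShell E r := by
  simpa [hi] using hz i (Set.mem_univ i)

lemma norm_lt_of_mem_shellBox {T : Finset ι} {r : ℝ} {z : ι → E}
    (hz : z ∈ shellBox E T r) {i : ι} (hi : i ∈ T) : ‖z i‖ < 2 * r :=
  (mem_sphericalShell.1 (mem_sphericalShell_of_mem_shellBox hz hi)).1

lemma norm_lt_one_of_mem_shellBox {T : Finset ι} {r : ℝ} {z : ι → E}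
    (hz : z ∈ shellBox E T r) {i : ι} (hi : i ∉ T) : ‖z i‖ < 1 := by
  simpa [hi] using hz i (Set.mem_univ i)

lemma isOpen_shellBox [Finite ι] (T : Finset ι) (r : ℝ) : IsOpen (shellBox E T r) := by
  refine isOpen_set_pi Set.finite_univ fun i _ ↦ ?_
  split_ifs
  exacts [isOpen_sphericalShell r, Metric.isOpen_ball]

lemma isBounded_shellBox (T : Finset ι) (r : ℝ) : Bornology.IsBounded (shellBox E T r) := by
  refine Bornology.IsBounded.pi fun i ↦ ?_
  split_ifs
  exacts [Metric.isBounded_ball.subset Set.sdiff_subset, Metric.isBounded_ball]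

variable [NormedSpace ℝ E]

lemma shellBox_nonempty [Nontrivial E] (T : Finset ι) {r : ℝ} (hr : 0 < r) :
    (shellBox E T r).Nonempty := by
  refine Set.univ_pi_nonempty_iff.2 fun i ↦ ?_
  split_ifs
  exacts [sphericalShell_nonempty hr, Metric.nonempty_ball.2 one_pos]

variable [Fintype ι] [FiniteDimensional ℝ E] [MeasurableSpace E] (μ : Measure E)
  [μ.IsAddHaarMeasure]

lemma measureReal_shellBox_one_pos [Nontrivial E] (T : Finset ι) :
    0 < (Measure.pi fun _ ↦ μ).real (shellBox E T 1) :=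
  ENNReal.toReal_pos ((isOpen_shellBox T 1).measure_pos _ (shellBox_nonempty T one_pos)).ne'
    (isBounded_shellBox T 1).measure_lt_top.ne

variable [BorelSpace E]

lemma measureReal_shellBox (T : Finset ι) {r : ℝ} (hr : 0 < r) :
    (Measure.pi fun _ ↦ μ).real (shellBox E T r) =
      r ^ (finrank ℝ E * T.card) * (Measure.pi fun _ ↦ μ).real (shellBox E T 1) := by
  have hscale (i : ι) : μ (if i ∈ T then sphericalShell E r else Metric.ball 0 1) =
      (if i ∈ T then ENNReal.ofReal (r ^ finrank ℝ E) else 1) *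
        μ (if i ∈ T then sphericalShell E 1 else Metric.ball 0 1) := by
    split_ifs
    · rw [sphericalShell_eq_smul hr, Measure.addHaar_smul_of_nonneg μ hr.le]
    · rw [one_mul]
  simp only [Measure.real, shellBox, Measure.pi_pi, hscale, Finset.prod_mul_distrib,
    Finset.prod_ite_mem, Finset.univ_inter, Finset.prod_const, ENNReal.toReal_mul,
    ENNReal.toReal_pow, ENNReal.toReal_ofReal (pow_nonneg hr.le _), pow_mul]

/-- A function bounded below on shell boxes by the inverse of their volume picks up a fixed amount
of integral at every scale. -/
lemma not_integrable_of_le_on_shellBox [Nontrivial E] {T : Finset ι} (hT : T.Nonempty)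
    {l : Filter ℝ} [l.NeBot] [l.IsCountablyGenerated] (hpos : ∀ᶠ r in l, 0 < r)
    (hescape : ∀ x : E, ∀ᶠ r in l, x ∉ sphericalShell E r) {f : (ι → E) → ℝ} {c : ℝ} (hc : 0 < c)
    (hle : ∀ᶠ r in l, ∀ᵐ z ∂Measure.pi fun _ ↦ μ, z ∈ shellBox E T r →
      c * (r ^ (finrank ℝ E * T.card))⁻¹ ≤ f z) :
    ¬ Integrable f (Measure.pi fun _ ↦ μ) := by
  intro hf
  have hmeas (r : ℝ) : MeasurableSet (shellBox E T r) := (isOpen_shellBox T r).measurableSet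
  refine not_integrable_of_le_setIntegral (l := l) (A := shellBox E T) hmeas (fun z ↦ ?_)
    (mul_pos hc (measureReal_shellBox_one_pos μ T)) ?_ hf
  · obtain ⟨i, hi⟩ := hT
    filter_upwards [hescape (z i)] with r hr hz
    exact hr (mem_sphericalShell_of_mem_shellBox hz hi)
  · filter_upwards [hpos, hle] with r hr hle
    have hfinite : (Measure.pi fun _ ↦ μ) (shellBox E T r) ≠ ⊤ :=
      (isBounded_shellBox T r).measure_lt_top.ne
    calc c * (Measure.pi fun _ ↦ μ).real (shellBox E T 1)
        = ∫ _ in shellBox E T r, c * (r ^ (finrank ℝ E * T.card))⁻¹ ∂Measure.pi fun _ ↦ μ := by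
          rw [setIntegral_const, measureReal_shellBox μ T hr, smul_eq_mul]
          field_simp
      _ ≤ ∫ z in shellBox E T r, f z ∂Measure.pi fun _ ↦ μ :=
          setIntegral_mono_on_ae (integrableOn_const hfinite) hf.integrableOn (hmeas r) hle

end Shells

section Shear

variable {ι E : Type*} [DecidableEq ι]

/-- The map translating the coordinates in `T` by the vector `g z`: it turns positions relative to
a base point into absolute positions. -/
def shear [Add E] (T : Finset ι) (g : (ι → E) → E) (z : ι → E) : ι → E :=
  fun i ↦ if i ∈ T then z i + g z else z i

lemma measurePreserving_shear [Fintype ι] [AddGroup E] [MeasurableSpace E] [MeasurableAdd₂ E]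
    (μ : Measure E) [SigmaFinite μ] [μ.IsAddRightInvariant] (T : Finset ι) {g : (ι → E) → E}
    (hg : Measurable g) (hgT : DependsOn g (T : Set ι)ᶜ) :
    MeasurePreserving (shear T g) (Measure.pi fun _ ↦ μ) (Measure.pi fun _ ↦ μ) := by
  let split := MeasurableEquiv.piEquivPiSubtypeProd (fun _ : ι ↦ E) (· ∉ T)
  have hsplit := measurePreserving_piEquivPiSubtypeProd (fun _ : ι ↦ μ) (· ∉ T)
  have hskew : MeasurePreserving (fun p : ({i // i ∉ T} → E) × ({i // ¬ i ∉ T} → E) ↦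
      (p.1, p.2 + fun _ ↦ g (split.symm (p.1, 0))))
      ((Measure.pi fun _ ↦ μ).prod (Measure.pi fun _ ↦ μ))
      ((Measure.pi fun _ ↦ μ).prod (Measure.pi fun _ ↦ μ)) :=
    (MeasurePreserving.id _).skew_product (g := fun w t ↦ t + fun _ ↦ g (split.symm (w, 0)))
      (by fun_prop) (.of_forall fun w ↦ (measurePreserving_add_right _ _).map_eq)
  have hshear : shear T g = split.symm ∘
      (fun p ↦ (p.1, p.2 + fun _ ↦ g (split.symm (p.1, 0)))) ∘ split := by
    ext z i
    have hbase : g (split.symm ((split z).1, 0)) = g z :=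
      hgT fun j hj ↦ by simp_all [split]
    by_cases hi : i ∈ T <;> simp [shear, split, hi, ← hbase]
  rw [hshear]
  exact (hsplit.symm split).comp (hskew.comp hsplit)

end Shear

section PairProduct

variable {V E : Type*} [NormedAddCommGroup E]

/-- The product over all ordered pairs of vertices of `W` of the propagators
`‖x u - x w‖ ^ (-κ u w)`. An undirected edge occurs in both orders, and hence contributes with
total exponent `-(κ u w + κ w u)`; pairs of weight zero contribute `1`, even on the diagonal. -/
noncomputable def pairProduct (κ : V → V → ℝ) (W : Finset V) (x : V → E) : ℝ :=
  ∏ p ∈ W ×ˢ W, ‖x p.1 - x p.2‖ ^ (-κ p.1 p.2)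

lemma rpow_neg_sum_le_prod_rpow_neg {α : Type*} {s : Finset α} {d k : α → ℝ} {ρ : ℝ} (hρ : 0 < ρ)
    (hd : ∀ i ∈ s, 0 ≤ d i) (hk : ∀ i ∈ s, 0 ≤ k i) (hdk : ∀ i ∈ s, d i = 0 → k i = 0)
    (hle : ∀ i ∈ s, d i ≤ ρ) : ρ ^ (-∑ i ∈ s, k i) ≤ ∏ i ∈ s, d i ^ (-k i) := by
  rw [← Finset.sum_neg_distrib, Real.rpow_sum_of_pos hρ]
  refine Finset.prod_le_prod (fun i _ ↦ by positivity) fun i hi ↦ ?_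
  rcases (hd i hi).eq_or_lt with h0 | hpos
  · simp [hdk i hi h0.symm]
  · exact Real.rpow_le_rpow_of_nonpos hpos (hle i hi) (neg_nonpos.2 (hk i hi))

lemma rpow_mul_rpow_le_pairProduct [DecidableEq V] {κ : V → V → ℝ} (hκ : ∀ u w, 0 ≤ κ u w)
    (hdiag : ∀ u, κ u u = 0) {S W : Finset V} (hSW : S ⊆ W) {x : V → E}
    (hx : Set.InjOn x W) {α β : ℝ} (hα : 0 < α) (hβ : 0 < β)
    (hin : ∀ u ∈ S, ∀ w ∈ S, ‖x u - x w‖ ≤ α) (hout : ∀ u ∈ W, ∀ w ∈ W, ‖x u - x w‖ ≤ β) :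
    α ^ (-∑ p ∈ S ×ˢ S, κ p.1 p.2) * β ^ (-∑ p ∈ W ×ˢ W \ S ×ˢ S, κ p.1 p.2) ≤
      pairProduct κ W x := by
  have hSW2 : S ×ˢ S ⊆ W ×ˢ W := Finset.product_subset_product hSW hSW
  have hzero : ∀ p ∈ W ×ˢ W, ‖x p.1 - x p.2‖ = 0 → κ p.1 p.2 = 0 := fun p hp h ↦ by
    rw [hx (Finset.mem_product.1 hp).1 (Finset.mem_product.1 hp).2 (norm_sub_eq_zero_iff.1 h),
      hdiag]
  rw [pairProduct, ← Finset.prod_sdiff hSW2, mul_comm]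
  refine mul_le_mul ?_ ?_ (by positivity) (by positivity)
  · refine rpow_neg_sum_le_prod_rpow_neg hβ (fun _ _ ↦ norm_nonneg _) (fun _ _ ↦ hκ _ _)
      (fun p hp ↦ hzero p (Finset.sdiff_subset hp)) fun p hp ↦ ?_
    have hpW := Finset.mem_product.1 (Finset.sdiff_subset hp)
    exact hout _ hpW.1 _ hpW.2
  · refine rpow_neg_sum_le_prod_rpow_neg hα (fun _ _ ↦ norm_nonneg _) (fun _ _ ↦ hκ _ _)
      (fun p hp ↦ hzero p (hSW2 hp)) fun p hp ↦ ?_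
    exact hin _ (Finset.mem_product.1 hp).1 _ (Finset.mem_product.1 hp).2

end PairProduct

section ExtendedConfigurations

open Module

variable {ι V E : Type*} {f : ι ↪ V} {p : V → E}

lemma norm_extend_le [Norm E] {y : ι → E} {u : V} {B : ℝ} (hy : ∀ i, f i = u → ‖y i‖ ≤ B)
    (hp : ‖p u‖ ≤ B) : ‖Function.extend f y p u‖ ≤ B := by
  by_cases hu : ∃ i, f i = u
  · obtain ⟨i, rfl⟩ := hu
    rw [f.injective.extend_apply]
    exact hy i rfl
  · rwa [Function.extend_apply' _ _ _ hu]

lemma measurable_extend_apply [MeasurableSpace E] (u : V) :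
    Measurable fun y : ι → E ↦ Function.extend f y p u := by
  by_cases hu : ∃ i, f i = u
  · obtain ⟨i, rfl⟩ := hu
    simp only [f.injective.extend_apply]
    fun_prop
  · simp only [Function.extend_apply' _ _ _ hu, measurable_const]

lemma dependsOn_extend_apply {T : Finset ι} {u : V} (hu : u ∉ T.map f) :
    DependsOn (fun y : ι → E ↦ Function.extend f y p u) (T : Set ι)ᶜ := by
  intro y y' h
  by_cases hu' : ∃ i, f i = u
  · obtain ⟨i, rfl⟩ := hu'
    simpa only [f.injective.extend_apply] using h i (by simpa using hu)
  · simp only [Function.extend_apply' _ _ _ hu']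

variable [Fintype ι] [NormedAddCommGroup E] [NormedSpace ℝ E] [FiniteDimensional ℝ E]
  [Nontrivial E] [MeasurableSpace E] [BorelSpace E] (μ : Measure E) [μ.IsAddHaarMeasure]

lemma ae_eval_ne_eval {i j : ι} (hij : i ≠ j) :
    ∀ᵐ y ∂Measure.pi fun _ ↦ μ, y i ≠ y j := by
  classical
  let diagonal : Submodule ℝ (ι → E) :=
    LinearMap.ker (LinearMap.proj (R := ℝ) (φ := fun _ ↦ E) i - LinearMap.proj j)
  have hdiagonal : diagonal ≠ ⊤ := by
    obtain ⟨x, hx⟩ := exists_ne (0 : E)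
    intro h
    have hsingle : Pi.single i x ∈ diagonal := h ▸ Submodule.mem_top
    exact hx (by simpa [diagonal, hij.symm] using hsingle)
  refine ae_iff.2 ?_
  convert Measure.addHaar_submodule (Measure.pi fun _ ↦ μ) diagonal hdiagonal using 2
  ext y
  simp [diagonal, sub_eq_zero]

lemma ae_injOn_extend {W : Finset V} (hp : Set.InjOn p (W \ Set.range f)) :
    ∀ᵐ y ∂Measure.pi fun _ ↦ μ, Set.InjOn (Function.extend f y p) W := by
  classical
  have hfree_fixed (i : ι) {w : V} (hw : w ∉ Set.range f) :
      ∀ᵐ y ∂Measure.pi fun _ ↦ μ, Function.extend f y p (f i) ≠ Function.extend f y p w := by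
    simp only [f.injective.extend_apply, Function.extend_apply' _ _ _ hw]
    exact Measure.ae_eval_ne (fun _ ↦ μ) i (p w)
  have hpair : ∀ u ∈ W, ∀ w ∈ W, ∀ᵐ y ∂Measure.pi fun _ ↦ μ,
      Function.extend f y p u = Function.extend f y p w → u = w := by
    intro u huW w hwW
    by_cases huw : u = w
    · exact .of_forall fun _ _ ↦ huw
    suffices h : ∀ᵐ y ∂Measure.pi fun _ ↦ μ,
        Function.extend f y p u ≠ Function.extend f y p w from h.mono fun y hy h ↦ (hy h).elim
    by_cases hu : u ∈ Set.range f <;> by_cases hw : w ∈ Set.range f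
    · obtain ⟨i, rfl⟩ := hu
      obtain ⟨j, rfl⟩ := hw
      simp only [f.injective.extend_apply]
      exact ae_eval_ne_eval μ fun h ↦ huw (congrArg f h)
    · obtain ⟨i, rfl⟩ := hu
      exact hfree_fixed i hw
    · obtain ⟨j, rfl⟩ := hw
      exact (hfree_fixed j hu).mono fun _ ↦ Ne.symm
    · simp only [Function.extend_apply' _ _ _ hu, Function.extend_apply' _ _ _ hw]
      exact .of_forall fun _ h ↦ huw (hp ⟨huW, hu⟩ ⟨hwW, hw⟩ h)
  filter_upwards [(Filter.eventually_all_finset W).2 fun u hu ↦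
    (Filter.eventually_all_finset W).2 (hpair u hu)] with y hy u hu w hw
  exact hy u hu w hw

end ExtendedConfigurations

section RelativeConfigurations

variable {ι V E : Type*} [NormedAddCommGroup E] {f : ι ↪ V} {p : V → E}

lemma exists_forall_norm_le (p : V → E) (W : Finset V) : ∃ M, 1 ≤ M ∧ ∀ u ∈ W, ‖p u‖ ≤ M := by
  obtain ⟨M, hM⟩ := (W.image fun u ↦ ‖p u‖).exists_le
  exact ⟨max 1 M, le_max_left _ _, fun u hu ↦
    (hM _ (Finset.mem_image_of_mem _ hu)).trans (le_max_right _ _)⟩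

lemma forall_norm_sub_le_of_forall_norm_sub_le {s : Finset V} {x : V → E} (c : E) {B : ℝ}
    (h : ∀ u ∈ s, ‖x u - c‖ ≤ B) : ∀ u ∈ s, ∀ w ∈ s, ‖x u - x w‖ ≤ 2 * B := fun u hu w hw ↦
  calc ‖x u - x w‖ ≤ ‖x u - c‖ + ‖x w - c‖ := by
        simpa only [sub_sub_sub_cancel_right] using norm_sub_le (x u - c) (x w - c)
    _ ≤ 2 * B := by linarith [h u hu, h w hw]

variable [DecidableEq ι]

lemma extend_shear_apply_base {k : V} {T : Finset ι} (hk : k ∉ T.map f) (g : (ι → E) → E)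
    (z : ι → E) : Function.extend f (shear T g z) p k = Function.extend f z p k := by
  by_cases hfree : ∃ i, f i = k
  · obtain ⟨i, rfl⟩ := hfree
    have hi : i ∉ T := by simpa using hk
    simp only [f.injective.extend_apply, shear, hi, if_false]
  · simp only [Function.extend_apply' _ _ _ hfree]

variable {k : V} {T : Finset ι} {r : ℝ} {z : ι → E}

lemma norm_extend_shear_sub_le [DecidableEq V] (hk : k ∉ T.map f) (hr : 0 < r)
    (hz : z ∈ shellBox E T r) {u : V} (hu : u ∈ insert k (T.map f)) :
    ‖Function.extend f (shear T (fun z ↦ Function.extend f z p k) z) p u -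
      Function.extend f z p k‖ ≤ 2 * r := by
  rcases Finset.mem_insert.1 hu with rfl | hu
  · rw [extend_shear_apply_base hk, sub_self, norm_zero]
    positivity
  · obtain ⟨i, hi, rfl⟩ := Finset.mem_map.1 hu
    simp only [f.injective.extend_apply, shear, hi, if_true, add_sub_cancel_right]
    exact (norm_lt_of_mem_shellBox hz hi).le

lemma norm_extend_shear_le (hk : k ∉ T.map f) (hr1 : r ≤ 1) (hz : z ∈ shellBox E T r)
    {M : ℝ} (hM : 1 ≤ M) (hpk : ‖p k‖ ≤ M) {u : V} (hpu : ‖p u‖ ≤ M) :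
    ‖Function.extend f (shear T (fun z ↦ Function.extend f z p k) z) p u‖ ≤ 3 * M := by
  refine norm_extend_le (fun i _ ↦ ?_) (by linarith)
  by_cases hi : i ∈ T
  · have hbase : ‖Function.extend f z p k‖ ≤ M := by
      refine norm_extend_le (fun j hj ↦ ?_) hpk
      have hjT : j ∉ T := fun h ↦ hk (Finset.mem_map.2 ⟨j, h, hj⟩)
      exact (norm_lt_one_of_mem_shellBox hz hjT).le.trans hM
    simp only [shear, hi, if_true]
    linarith [norm_add_le (z i) (Function.extend f z p k), norm_lt_of_mem_shellBox hz hi]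
  · simp only [shear, hi, if_false]
    linarith [norm_lt_one_of_mem_shellBox hz hi]

lemma norm_extend_le_of_mem_shellBox (hr1 : 1 ≤ r) (hz : z ∈ shellBox E T r) {M : ℝ}
    (hM : 1 ≤ M) {u : V} (hpu : ‖p u‖ ≤ M) : ‖Function.extend f z p u‖ ≤ 2 * (M * r) := by
  have hr_le : r ≤ M * r := le_mul_of_one_le_left (by linarith) hM
  have hM_le : M ≤ M * r := le_mul_of_one_le_right (by linarith) hr1
  refine norm_extend_le (fun i _ ↦ ?_) (by linarith)
  by_cases hi : i ∈ T
  · linarith [norm_lt_of_mem_shellBox hz hi]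
  · linarith [norm_lt_one_of_mem_shellBox hz hi]

end RelativeConfigurations

section PowerCounting

open Filter Module Topology

lemma inv_pow_le_rpow_neg_of_le_one {r I : ℝ} {n : ℕ} (hr : 0 < r) (hr1 : r ≤ 1) (hn : n ≤ I) :
    (r ^ n)⁻¹ ≤ r ^ (-I) := by
  rw [← Real.rpow_natCast, ← Real.rpow_neg hr.le]
  exact Real.rpow_le_rpow_of_exponent_ge hr hr1 (neg_le_neg hn)

lemma inv_pow_le_rpow_neg_of_one_le {r I : ℝ} {n : ℕ} (hr1 : 1 ≤ r) (hn : I ≤ n) :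
    (r ^ n)⁻¹ ≤ r ^ (-I) := by
  rw [← Real.rpow_natCast, ← Real.rpow_neg (by linarith)]
  exact Real.rpow_le_rpow_of_exponent_le hr1 (neg_le_neg hn)

lemma exists_map_eq_of_coe_subset_range {ι V : Type*} [Finite ι] {f : ι ↪ V} {R : Finset V}
    (hR : (R : Set V) ⊆ Set.range f) : ∃ T : Finset ι, T.map f = R := by
  cases nonempty_fintype ι
  have hR' : R ⊆ Finset.univ.map f := by simpa [← Finset.coe_subset] using hR
  obtain ⟨T, -, hT⟩ := Finset.subset_map_iff.1 hR'
  exact ⟨T, hT.symm⟩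

variable {ι V E : Type*} [Fintype ι] [DecidableEq V] [NormedAddCommGroup E] [NormedSpace ℝ E]
  [FiniteDimensional ℝ E] [Nontrivial E] [MeasurableSpace E] [BorelSpace E]
  (μ : Measure E) [μ.IsAddHaarMeasure] {f : ι ↪ V} {p : V → E} {S W : Finset V} {κ : V → V → ℝ}

/-- Ultraviolet divergence: the vertices of `S` collapse onto one of them, `k`. -/
lemma not_integrable_pairProduct_of_collapse (hκ : ∀ u w, 0 ≤ κ u w)
    (hdiag : ∀ u, κ u u = 0) (hp : Set.InjOn p (W \ Set.range f)) {k : V}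
    (hkS : k ∈ S) (hSW : S ⊆ W) (hS : (S.erase k).Nonempty)
    (hfree : (S.erase k : Set V) ⊆ Set.range f)
    (hcount : ((S.erase k).card * finrank ℝ E : ℝ) ≤ ∑ q ∈ S ×ˢ S, κ q.1 q.2) :
    ¬ Integrable (fun y ↦ pairProduct κ W (Function.extend f y p)) (Measure.pi fun _ ↦ μ) := by
  classical
  obtain ⟨T, hTS⟩ := exists_map_eq_of_coe_subset_range hfree
  have hk : k ∉ T.map f := hTS ▸ Finset.notMem_erase k S
  have hS_insert : S = insert k (T.map f) := by rw [hTS, Finset.insert_erase hkS]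
  rw [← hTS, Finset.map_nonempty] at hS
  rw [← hTS, Finset.card_map] at hcount
  intro hint
  obtain ⟨M, hM, hpM⟩ := exists_forall_norm_le p W
  have hshear := measurePreserving_shear μ T (measurable_extend_apply (p := p) k)
    (dependsOn_extend_apply hk)
  set I := ∑ q ∈ S ×ˢ S, κ q.1 q.2
  set J := ∑ q ∈ W ×ˢ W \ S ×ˢ S, κ q.1 q.2
  have hC : 0 < 6 * M := by linarith
  refine not_integrable_of_le_on_shellBox μ hS (l := 𝓝[>] 0) self_mem_nhdsWithin
    eventually_nhdsGT_zero_notMem_sphericalShell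
    (mul_pos (Real.rpow_pos_of_pos hC (-I)) (Real.rpow_pos_of_pos hC (-J))) ?_
    (hshear.integrable_comp_of_integrable hint)
  filter_upwards [self_mem_nhdsWithin, nhdsWithin_le_nhds (Iic_mem_nhds one_pos)]
    with r (hr : 0 < r) (hr1 : r ≤ 1)
  filter_upwards [hshear.quasiMeasurePreserving.ae (ae_injOn_extend μ hp)] with z hinj hz
  have hpow : (r ^ (finrank ℝ E * T.card))⁻¹ ≤ r ^ (-I) :=
    inv_pow_le_rpow_neg_of_le_one hr hr1 (by push_cast; linarith)
  set x := Function.extend f (shear T (fun z ↦ Function.extend f z p k) z) p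
  have hclose : ∀ u ∈ S, ∀ w ∈ S, ‖x u - x w‖ ≤ 2 * (2 * r) :=
    forall_norm_sub_le_of_forall_norm_sub_le (Function.extend f z p k)
      fun u hu ↦ norm_extend_shear_sub_le hk hr hz (hS_insert ▸ hu)
  have hbounded : ∀ u ∈ W, ∀ w ∈ W, ‖x u - x w‖ ≤ 2 * (3 * M) := by
    refine forall_norm_sub_le_of_forall_norm_sub_le 0 fun u hu ↦ ?_
    rw [sub_zero]
    exact norm_extend_shear_le hk hr1 hz hM (hpM k (hSW hkS)) (hpM u hu)
  calc (6 * M) ^ (-I) * (6 * M) ^ (-J) * (r ^ (finrank ℝ E * T.card))⁻¹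
      ≤ (6 * M) ^ (-I) * (6 * M) ^ (-J) * r ^ (-I) := by gcongr
    _ = (6 * M * r) ^ (-I) * (6 * M) ^ (-J) := by rw [Real.mul_rpow hC.le hr.le]; ring
    _ ≤ _ := rpow_mul_rpow_le_pairProduct hκ hdiag hSW hinj (by positivity) hC
      (fun u hu w hw ↦ (hclose u hu w hw).trans (by nlinarith))
      (fun u hu w hw ↦ (hbounded u hu w hw).trans (by linarith))

/-- Infrared divergence: the vertices outside `S` escape to infinity. -/
lemma not_integrable_pairProduct_of_escape (hκ : ∀ u w, 0 ≤ κ u w)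
    (hdiag : ∀ u, κ u u = 0) (hp : Set.InjOn p (W \ Set.range f)) (hSW : S ⊆ W)
    (hWS : (W \ S).Nonempty) (hfree : (↑(W \ S) : Set V) ⊆ Set.range f)
    (hcount : ∑ q ∈ W ×ˢ W \ S ×ˢ S, κ q.1 q.2 ≤ ((W \ S).card * finrank ℝ E : ℝ)) :
    ¬ Integrable (fun y ↦ pairProduct κ W (Function.extend f y p)) (Measure.pi fun _ ↦ μ) := by
  classical
  obtain ⟨T, hTS⟩ := exists_map_eq_of_coe_subset_range hfree
  have hST : Disjoint S (T.map f) := hTS ▸ Finset.disjoint_sdiff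
  rw [← hTS, Finset.map_nonempty] at hWS
  rw [← hTS, Finset.card_map] at hcount
  intro hint
  obtain ⟨M, hM, hpM⟩ := exists_forall_norm_le p W
  set I := ∑ q ∈ S ×ˢ S, κ q.1 q.2
  set J := ∑ q ∈ W ×ˢ W \ S ×ˢ S, κ q.1 q.2
  have hC : 0 < 4 * M := by linarith
  refine not_integrable_of_le_on_shellBox μ hWS (l := atTop) (eventually_gt_atTop 0)
    eventually_atTop_notMem_sphericalShell
    (mul_pos (Real.rpow_pos_of_pos hC (-I)) (Real.rpow_pos_of_pos hC (-J))) ?_ hint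
  filter_upwards [eventually_ge_atTop 1] with r hr1
  filter_upwards [ae_injOn_extend μ hp] with z hinj hz
  have hr : 0 < r := by linarith
  have hpow : (r ^ (finrank ℝ E * T.card))⁻¹ ≤ r ^ (-J) :=
    inv_pow_le_rpow_neg_of_one_le hr1 (by push_cast; linarith)
  set x := Function.extend f z p
  have hbounded : ∀ u ∈ S, ∀ w ∈ S, ‖x u - x w‖ ≤ 2 * M := by
    refine forall_norm_sub_le_of_forall_norm_sub_le 0 fun u hu ↦ ?_
    rw [sub_zero]
    refine norm_extend_le (fun i hi ↦ ?_) (hpM u (hSW hu))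
    have hiT : i ∉ T := fun h ↦ Finset.disjoint_left.1 hST hu (Finset.mem_map.2 ⟨i, h, hi⟩)
    exact (norm_lt_one_of_mem_shellBox hz hiT).le.trans hM
  have hfar : ∀ u ∈ W, ∀ w ∈ W, ‖x u - x w‖ ≤ 2 * (2 * (M * r)) := by
    refine forall_norm_sub_le_of_forall_norm_sub_le 0 fun u hu ↦ ?_
    rw [sub_zero]
    exact norm_extend_le_of_mem_shellBox hr1 hz hM (hpM u hu)
  calc (4 * M) ^ (-I) * (4 * M) ^ (-J) * (r ^ (finrank ℝ E * T.card))⁻¹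
      ≤ (4 * M) ^ (-I) * (4 * M) ^ (-J) * r ^ (-J) := by gcongr
    _ = (4 * M) ^ (-I) * (4 * M * r) ^ (-J) := by rw [Real.mul_rpow hC.le hr.le]; ring
    _ ≤ _ := rpow_mul_rpow_le_pairProduct hκ hdiag hSW hinj hC (by positivity)
      (fun u hu w hw ↦ (hbounded u hu w hw).trans (by linarith))
      (fun u hu w hw ↦ (hfar u hu w hw).trans (by linarith))

end PowerCounting

section RegularWeights

variable {V : Type*} [Fintype V] [DecidableEq V] {κ : V → V → ℝ} {d : ℝ} {S : Finset V}

lemma sum_product_self_eq_sub_cut (hdeg : ∀ u, ∑ w, κ u w = d) (S : Finset V) :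
    ∑ q ∈ S ×ˢ S, κ q.1 q.2 = S.card * d - ∑ u ∈ S, ∑ w ∈ Sᶜ, κ u w := by
  rw [Finset.sum_product, ← nsmul_eq_mul, ← Finset.sum_const, ← Finset.sum_sub_distrib]
  exact Finset.sum_congr rfl fun u _ ↦ by linarith [hdeg u, Finset.sum_add_sum_compl S (κ u)]

lemma sum_cut_compl (hsym : ∀ u w, κ u w = κ w u) (S : Finset V) :
    ∑ u ∈ Sᶜ, ∑ w ∈ Sᶜᶜ, κ u w = ∑ u ∈ S, ∑ w ∈ Sᶜ, κ u w := by
  rw [compl_compl, Finset.sum_comm]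
  simp only [hsym]

lemma card_sub_one_mul_le_sum_product_self (hdeg : ∀ u, ∑ w, κ u w = d)
    (hcut : ∑ u ∈ S, ∑ w ∈ Sᶜ, κ u w ≤ d) :
    (S.card - 1) * d ≤ ∑ q ∈ S ×ˢ S, κ q.1 q.2 := by
  linarith [sum_product_self_eq_sub_cut hdeg S]

lemma sum_product_erase_univ (hdeg : ∀ u, ∑ w, κ u w = d) (hsym : ∀ u w, κ u w = κ w u)
    (hdiag : ∀ u, κ u u = 0) (v : V) :
    ∑ q ∈ Finset.univ.erase v ×ˢ Finset.univ.erase v, κ q.1 q.2 =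
      ((Finset.univ.erase v).card - 1) * d := by
  have hcut : ∑ u ∈ Finset.univ.erase v, ∑ w ∈ (Finset.univ.erase v)ᶜ, κ u w = d := by
    rw [Finset.compl_erase, Finset.compl_univ, insert_empty_eq]
    simp only [Finset.sum_singleton, hsym _ v]
    rw [Finset.sum_erase _ (hdiag v), hdeg]
  rw [sum_product_self_eq_sub_cut hdeg, hcut]
  ring

lemma sum_sdiff_product_self_le (hdeg : ∀ u, ∑ w, κ u w = d) (hsym : ∀ u w, κ u w = κ w u)
    (hdiag : ∀ u, κ u u = 0) {v : V} (hv : v ∉ S) (hcut : ∑ u ∈ S, ∑ w ∈ Sᶜ, κ u w ≤ d) :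
    ∑ q ∈ Finset.univ.erase v ×ˢ Finset.univ.erase v \ S ×ˢ S, κ q.1 q.2 ≤
      (Finset.univ.erase v \ S).card * d := by
  have hSW : S ⊆ Finset.univ.erase v := fun u hu ↦ by simpa using ne_of_mem_of_not_mem hu hv
  have hcard : ((Finset.univ.erase v).card : ℝ) = (Finset.univ.erase v \ S).card + S.card := by
    exact_mod_cast (Finset.card_sdiff_add_card_eq_card hSW).symm
  have hsplit := Finset.sum_sdiff (f := fun q : V × V ↦ κ q.1 q.2)
    (Finset.product_subset_product hSW hSW)
  rw [sum_product_erase_univ hdeg hsym hdiag, hcard] at hsplit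
  linarith [card_sub_one_mul_le_sum_product_self hdeg hcut]

end RegularWeights

section CutDivergence

open Module

variable {V : Type*} [DecidableEq V] {v a b : V}

lemma exists_mem_forall_mem_erase_ne {S : Finset V} (hS : S.Nonempty)
    (hab : ¬ (a ∈ S ∧ b ∈ S)) : ∃ k ∈ S, ∀ u ∈ S.erase k, u ≠ a ∧ u ≠ b := by
  by_cases ha : a ∈ S
  · exact ⟨a, ha, by grind⟩
  by_cases hb : b ∈ S
  · exact ⟨b, hb, by grind⟩
  obtain ⟨k, hk⟩ := hS
  exact ⟨k, hk, by grind⟩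

variable [Fintype V] {E : Type*} {p : V → E}

lemma injOn_erase_sdiff_range_val (hp : p a ≠ p b) : Set.InjOn p
    ((Finset.univ.erase v : Finset V) \
      Set.range (Subtype.val : {u // u ≠ v ∧ u ≠ a ∧ u ≠ b} → V)) := by
  have hfixed : ∀ u ∈ ((Finset.univ.erase v : Finset V) : Set V) \
      Set.range (Subtype.val : {u // u ≠ v ∧ u ≠ a ∧ u ≠ b} → V), u = a ∨ u = b := by
    simp only [Finset.coe_erase, Finset.coe_univ, Subtype.range_coe_subtype, Set.mem_sdiff,
      Set.mem_univ, Set.mem_singleton_iff, Set.mem_ofPred_eq]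
    tauto
  intro u hu w hw huw
  rcases hfixed u hu with rfl | rfl <;> rcases hfixed w hw with rfl | rfl
  exacts [rfl, (hp huw).elim, (hp huw.symm).elim, rfl]

variable [NormedAddCommGroup E] [NormedSpace ℝ E] [FiniteDimensional ℝ E] [MeasurableSpace E]
  [BorelSpace E] (μ : Measure E) [μ.IsAddHaarMeasure] {κ : V → V → ℝ}

theorem not_integrable_pairProduct_of_cut_le (hκ : ∀ u w, 0 ≤ κ u w)
    (hsym : ∀ u w, κ u w = κ w u) (hdiag : ∀ u, κ u u = 0)
    (hdeg : ∀ u, ∑ w, κ u w = finrank ℝ E) (hp : p a ≠ p b) {S : Finset V}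
    (hS : 2 ≤ S.card) (hSc : 2 ≤ Sᶜ.card)
    (hcut : ∑ u ∈ S, ∑ w ∈ Sᶜ, κ u w ≤ finrank ℝ E) :
    ¬ Integrable (fun y : {u // u ≠ v ∧ u ≠ a ∧ u ≠ b} → E ↦
      pairProduct κ (Finset.univ.erase v) (Function.extend Subtype.val y p))
      (Measure.pi fun _ ↦ μ) := by
  wlog hv : v ∉ S generalizing S
  · exact this hSc (by rwa [compl_compl]) (by rwa [sum_cut_compl hsym])
      (by simpa only [Finset.mem_compl, not_not] using hv)
  have : Nontrivial E := nontrivial_of_ne _ _ hp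
  let free : {u // u ≠ v ∧ u ≠ a ∧ u ≠ b} ↪ V := .subtype _
  have hSW : S ⊆ Finset.univ.erase v := fun u hu ↦ by simpa using ne_of_mem_of_not_mem hu hv
  by_cases hab : a ∈ S ∧ b ∈ S
  · have hcard := Finset.card_compl_add_card S
    refine not_integrable_pairProduct_of_escape μ hκ hdiag (f := free)
      (injOn_erase_sdiff_range_val hp) hSW ?_ (fun u hu ↦ ⟨⟨u, by grind⟩, rfl⟩)
      (sum_sdiff_product_self_le hdeg hsym hdiag hv hcut)
    rw [← Finset.card_pos, Finset.card_sdiff_of_subset hSW, Finset.card_erase_of_mem (by simp),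
      Finset.card_univ]
    omega
  · obtain ⟨k, hkS, hk⟩ := exists_mem_forall_mem_erase_ne (Finset.card_pos.1 (by omega)) hab
    have hcard := Finset.card_erase_add_one hkS
    refine not_integrable_pairProduct_of_collapse μ hκ hdiag (f := free)
      (injOn_erase_sdiff_range_val hp) hkS hSW (Finset.card_pos.1 (by omega))
      (fun u hu ↦ ⟨⟨u, by grind⟩, rfl⟩) ?_
    refine le_of_eq_of_le ?_ (card_sub_one_mul_le_sum_product_self hdeg hcut)
    rw [← hcard, Nat.cast_add, Nat.cast_one, add_sub_cancel_right]

end CutDivergence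

section Decompletion

variable {V : Type*} [DecidableEq V]

lemma prod_filter_mk_mem_eq_prod_sq [Fintype V] {M : Type*} [CommMonoid M] {t : Finset (Sym2 V)}
    (ht : ∀ ed ∈ t, ¬ ed.IsDiag) (h : Sym2 V → M) :
    ∏ q : V × V with s(q.1, q.2) ∈ t, h s(q.1, q.2) = ∏ ed ∈ t, h ed ^ 2 := by
  rw [← Finset.prod_fiberwise_of_maps_to (t := t) (g := fun q : V × V ↦ s(q.1, q.2))
    fun q hq ↦ (Finset.mem_filter.1 hq).2]
  refine Finset.prod_congr rfl fun ed hed ↦ ?_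
  induction ed using Sym2.ind with
  | _ u w =>
    have huw : u ≠ w := ht _ hed
    have hfiber : ({q : V × V | s(q.1, q.2) ∈ t} : Finset (V × V)).filter
        (fun q ↦ s(q.1, q.2) = s(u, w)) = {(u, w), (w, u)} := by
      ext ⟨u', w'⟩
      simp only [Finset.mem_filter, Finset.mem_univ, true_and, Finset.mem_insert,
        Finset.mem_singleton, Prod.mk.injEq, Sym2.eq_iff]
      refine and_iff_right_of_imp ?_
      rintro (⟨rfl, rfl⟩ | ⟨rfl, rfl⟩)
      exacts [hed, Sym2.eq_swap ▸ hed]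
    rw [hfiber, Finset.prod_pair (by simp [huw]), Sym2.eq_swap (a := w), sq]

variable {E : Type*}

/-- The positions of the vertices in the decompletion at `v`: `a` and `b` are fixed at `pa` and
`pb` and `y` gives the others. The deleted vertex `v` gets the junk position `0`. -/
def vertexPosition [Zero E] (v a b : V) (pa pb : E) (y : {u // u ≠ v ∧ u ≠ a ∧ u ≠ b} → E)
    (u : V) : E :=
  if u = a then pa else if u = b then pb else if h : u ≠ v ∧ u ≠ a ∧ u ≠ b then y ⟨u, h⟩ else 0

lemma vertexPosition_eq_extend [Zero E] (v a b : V) (pa pb : E)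
    (y : {u // u ≠ v ∧ u ≠ a ∧ u ≠ b} → E) : vertexPosition v a b pa pb y =
      Function.extend Subtype.val y fun u ↦ if u = a then pa else if u = b then pb else 0 := by
  ext u
  by_cases hu : u ≠ v ∧ u ≠ a ∧ u ≠ b
  · rw [show u = Subtype.val (⟨u, hu⟩ : {u // u ≠ v ∧ u ≠ a ∧ u ≠ b}) from rfl,
      Subtype.val_injective.extend_apply]
    simp [vertexPosition, hu]
  · rw [Function.extend_apply' _ _ _ fun ⟨w, hw⟩ ↦ hu (hw ▸ w.2)]
    simp only [vertexPosition, hu, dif_neg, not_false_eq_true]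

variable [Fintype V] [NormedAddCommGroup E]

/-- The integrand of the position-space Feynman period of the decompletion of `G` at `v`: the
product of the propagators of the edges avoiding `v`. The symmetrised exponent makes sense on
unordered pairs for every `ν`, and is `-2 * lam * ν u w` for symmetric `ν`. -/
noncomputable def decompletionIntegrand (G : SimpleGraph V) [DecidableRel G.Adj] (ν : V → V → ℝ)
    (lam : ℝ) (v : V) (x : V → E) : ℝ :=
  ∏ ed ∈ G.edgeFinset.filter (fun ed ↦ v ∉ ed),
    Sym2.lift ⟨fun u w ↦ ‖x u - x w‖ ^ (-(lam * (ν u w + ν w u))),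
      fun u w ↦ by dsimp only; rw [norm_sub_rev, add_comm (ν u w)]⟩ ed

lemma decompletionIntegrand_eq_pairProduct (G : SimpleGraph V) [DecidableRel G.Adj]
    {ν : V → V → ℝ} (hsym : ∀ u w, ν u w = ν w u) (hnonedge : ∀ u w, ¬ G.Adj u w → ν u w = 0)
    (lam : ℝ) (v : V) (x : V → E) : decompletionIntegrand G ν lam v x =
      pairProduct (fun u w ↦ lam * ν u w) (Finset.univ.erase v) x := by
  let propagator : Sym2 V → ℝ := Sym2.lift ⟨fun u w ↦ ‖x u - x w‖ ^ (-(lam * ν u w)),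
    fun u w ↦ by dsimp only; rw [norm_sub_rev, hsym]⟩
  let t := G.edgeFinset.filter fun ed ↦ v ∉ ed
  have ht : ∀ ed ∈ t, ¬ ed.IsDiag := fun ed hed ↦
    G.not_isDiag_of_mem_edgeSet (SimpleGraph.mem_edgeFinset.1 (Finset.mem_filter.1 hed).1)
  calc decompletionIntegrand G ν lam v x
      = ∏ ed ∈ t, propagator ed ^ 2 := by
        refine Finset.prod_congr rfl fun ed _ ↦ ?_
        induction ed using Sym2.ind with
        | _ u w =>
          simp only [propagator, Sym2.lift_mk]
          rw [← Real.rpow_mul_natCast (norm_nonneg _), hsym w u]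
          congr 1
          push_cast
          ring
    _ = ∏ q : V × V with s(q.1, q.2) ∈ t, propagator s(q.1, q.2) :=
        (prod_filter_mk_mem_eq_prod_sq ht propagator).symm
    _ = pairProduct (fun u w ↦ lam * ν u w) (Finset.univ.erase v) x := by
        refine Finset.prod_subset (fun q hq ↦ ?_) fun q hq hqt ↦ ?_
        · simp only [t, Finset.mem_filter, Sym2.mem_iff, not_or] at hq
          simp [Ne.symm hq.2.2.1, Ne.symm hq.2.2.2]
        · have hadj : ¬ G.Adj q.1 q.2 := fun hadj ↦ hqt <| by
            simp only [Finset.mem_product, Finset.mem_erase, Finset.mem_univ, and_true] at hq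
            simp [t, hadj, hq.1.symm, hq.2.symm]
          simp [hnonedge _ _ hadj, propagator]

theorem decompletions_of_non_primitive_divergent_general [NormedSpace ℝ E]
    [FiniteDimensional ℝ E] [MeasurableSpace E] [BorelSpace E] (μ : Measure E)
    [μ.IsAddHaarMeasure] (G : SimpleGraph V) [DecidableRel G.Adj] {lam : ℝ} (hlam : 0 < lam)
    {ν : V → V → ℝ} (hν : ∀ u w, G.Adj u w → 0 ≤ ν u w)
    (hsym : ∀ u w, ν u w = ν w u) (hnonedge : ∀ u w, ¬ G.Adj u w → ν u w = 0)
    (hdeg : ∀ u, ∑ w, ν u w = Module.finrank ℝ E / lam)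
    (hnonprim : ∃ S : Finset V, 2 ≤ S.card ∧ 2 ≤ Sᶜ.card ∧
      ∑ u ∈ S, ∑ w ∈ Sᶜ, ν u w ≤ Module.finrank ℝ E / lam)
    {v a b : V} (hab : a ≠ b) {pa pb : E} (hpab : pa ≠ pb) :
    ¬ Integrable (fun y ↦ decompletionIntegrand G ν lam v (vertexPosition v a b pa pb y))
      (Measure.pi fun _ ↦ μ) := by
  obtain ⟨S, hS, hSc, hcut⟩ := hnonprim
  have hκ (u w : V) : 0 ≤ lam * ν u w := by
    by_cases h : G.Adj u w
    exacts [mul_nonneg hlam.le (hν u w h), by simp [hnonedge u w h]]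
  simp only [vertexPosition_eq_extend, decompletionIntegrand_eq_pairProduct G hsym hnonedge]
  refine not_integrable_pairProduct_of_cut_le μ hκ (fun u w ↦ by rw [hsym])
    (fun u ↦ by simp [hnonedge u u]) (fun u ↦ ?_) (by simpa [hab.symm] using hpab) hS hSc ?_
  · rw [← Finset.mul_sum, hdeg, mul_div_cancel₀ _ hlam.ne']
  · simp only [← Finset.mul_sum]
    rwa [← le_div_iff₀' hlam]

end Decompletion

/-- Every decompletion of a completed graph that is not primitive is
divergent: the position-space integrand is not Lebesgue integrable. -/
theorem decompletions_of_non_primitive_divergent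
    (D : ℕ) (hD : 3 ≤ D) (V : Type) [Fintype V] [DecidableEq V]
    (hV : 4 ≤ Fintype.card V)
    (G : SimpleGraph V) [DecidableRel G.Adj]
    (ν : V → V → ℝ) (hsym : ∀ u w, ν u w = ν w u)
    (hedge : ∀ u w, G.Adj u w → 0 < ν u w)
    (hnonedge : ∀ u w, ¬G.Adj u w → ν u w = 0)
    (hdeg : ∀ u : V, ∑ w : V, ν u w = (D : ℝ) / (((D : ℝ) - 2) / 2))
    (hnonprim : ∃ S : Finset V, 2 ≤ S.card ∧ 2 ≤ Sᶜ.card ∧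
      ∑ u ∈ S, ∑ w ∈ Sᶜ, ν u w ≤ (D : ℝ) / (((D : ℝ) - 2) / 2)) :
    let lam : ℝ := ((D : ℝ) - 2) / 2
    let F : ∀ (v a b : V), EuclideanSpace ℝ (Fin D) →
        ({u : V // u ≠ v ∧ u ≠ a ∧ u ≠ b} → EuclideanSpace ℝ (Fin D)) → ℝ :=
      fun v a b e y =>
        ∏ ed ∈ G.edgeFinset.filter (fun ed => v ∉ ed),
          Sym2.lift ⟨fun u w =>
            ‖(if u = a then 0 else if u = b then e
                else if h : u ≠ v ∧ u ≠ a ∧ u ≠ b then y ⟨u, h⟩ else 0) -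
              (if w = a then 0 else if w = b then e
                else if h : w ≠ v ∧ w ≠ a ∧ w ≠ b then y ⟨w, h⟩ else 0)‖
              ^ (-(lam * (ν u w + ν w u))),
            fun u w => by dsimp only; rw [norm_sub_rev, add_comm (ν u w)]⟩ ed
    ∀ (v a b : V), v ≠ a → v ≠ b → a ≠ b →
      ∀ e : EuclideanSpace ℝ (Fin D), ‖e‖ = 1 → ¬ Integrable (F v a b e) := by
  intro lam _ v a b _ _ hab e he
  have hlam : 0 < lam := half_pos (sub_pos.2 (mod_cast hD))
  have hdim : Module.finrank ℝ (EuclideanSpace ℝ (Fin D)) = D := finrank_euclideanSpace_fin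
  have he0 : e ≠ 0 := norm_ne_zero_iff.1 (he ▸ one_ne_zero)
  exact decompletions_of_non_primitive_divergent_general volume G hlam
    (fun u w h ↦ (hedge u w h).le) hsym hnonedge (by rwa [hdim]) (by rwa [hdim]) hab he0.symm
end

section
/- Let λ > 0 and D = 2λ + 2. Let G be a finite weighted graph with internal vertex set V_int and three external vertices labelled 0, 1, z, with real edge weights ν (symmetric, no self-loops, nonzero on only finitely many pairs). Then there exist unique real numbers σ_v for v ∈ V_int ∪ {0, 1, z} and a unique real number τ with the following property: the completed graph Ḡ, obtained from G by adjoining a new vertex ∞, adding for each v ∈ V_int ∪ {0, 1, z} an edge v–∞ of weight σ_v, and adding τ to the weight of the edge 0–1 (all other weights unchanged), satisfies that every internal vertex of Ḡ has weighted degree D/λ and each of the external vertices 0, 1, z, ∞ has weighted degree 0. Moreover, if λ = 1 and all edge weights of G are integers, then all σ_v and τ are integers; and if λ = 2 and all edge weights of G lie in (1/2)ℤ, then all σ_v and τ lie in (1/2)ℤ. -/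
/-!
The degree conditions determine every spoke weight `σ v` from the shift `τ`, and the last condition
`∑ v, σ v = 0` then becomes `2 τ = |V_int| K - ∑ u, ∑ w, ν u w`, where `K` is the required internal
degree. So completions exist uniquely wherever one can halve uniquely. By the handshake lemma the
total degree lies in `2 L` when the weights lie in a subgroup `L`; if `K` also lies in `2 L` then
`τ`, and with it every `σ v`, lies in `L`. For `λ = 1, 2` this applies with `L = λ⁻¹ ℤ`, because
`D / λ = 2 (λ + 1) / λ`.
-/

namespace WeightedGraph

open scoped Pointwise

variable {ι M : Type*} [Fintype ι] [AddCommGroup M]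

/-- The conditions on the weights `σ v` of the edges `v–∞` and the shift `τ` of the weight of the
edge `0–1` for the completed graph to have internal degree `K` and external degree `0`. The external
vertices `0, 1, z` are `Sum.inr 0, Sum.inr 1, Sum.inr 2`; the last condition is the one at `∞`. -/
def IsCompletion (K : M) (ν : ι ⊕ Fin 3 → ι ⊕ Fin 3 → M) (σ : ι ⊕ Fin 3 → M) (τ : M) : Prop :=
  (∀ i : ι, (∑ w, ν (Sum.inl i) w) + σ (Sum.inl i) = K) ∧
  ((∑ w, ν (Sum.inr 0) w) + τ + σ (Sum.inr 0) = 0) ∧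
  ((∑ w, ν (Sum.inr 1) w) + τ + σ (Sum.inr 1) = 0) ∧
  ((∑ w, ν (Sum.inr 2) w) + σ (Sum.inr 2) = 0) ∧
  (∑ v, σ v = 0)

/-- The weights of the edges to `∞` that the degree conditions at the vertices other than `∞` force
once the shift `τ` of the weight of the edge `0–1` is chosen. -/
def spokeWeight (K : M) (ν : ι ⊕ Fin 3 → ι ⊕ Fin 3 → M) (τ : M) : ι ⊕ Fin 3 → M :=
  Sum.elim (fun i => K - ∑ w, ν (Sum.inl i) w)
    ![-(∑ w, ν (Sum.inr 0) w) - τ, -(∑ w, ν (Sum.inr 1) w) - τ, -∑ w, ν (Sum.inr 2) w]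

variable {K : M} {ν : ι ⊕ Fin 3 → ι ⊕ Fin 3 → M} {σ : ι ⊕ Fin 3 → M} {τ : M}

theorem sum_spokeWeight :
    ∑ v, spokeWeight K ν τ v = Fintype.card ι • K - ∑ u, ∑ w, ν u w - 2 • τ := by
  rw [Fintype.sum_sum_type, Fin.sum_univ_three, Fintype.sum_sum_type (fun u => ∑ w, ν u w),
    Fin.sum_univ_three]
  simp only [spokeWeight, Sum.elim_inl, Sum.elim_inr, Matrix.cons_val, Finset.sum_sub_distrib,
    Finset.sum_const, Finset.card_univ]
  abel

theorem eq_spokeWeight_iff :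
    σ = spokeWeight K ν τ ↔
      (∀ i : ι, (∑ w, ν (Sum.inl i) w) + σ (Sum.inl i) = K) ∧
      ((∑ w, ν (Sum.inr 0) w) + τ + σ (Sum.inr 0) = 0) ∧
      ((∑ w, ν (Sum.inr 1) w) + τ + σ (Sum.inr 1) = 0) ∧
      ((∑ w, ν (Sum.inr 2) w) + σ (Sum.inr 2) = 0) := by
  simp only [funext_iff, Sum.forall, Fin.forall_fin_succ, Fin.forall_fin_zero, spokeWeight,
    Sum.elim_inl, Sum.elim_inr, Matrix.cons_val, Fin.succ_zero_eq_one, Fin.succ_one_eq_two,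
    add_eq_zero_iff_eq_neg', neg_add', eq_sub_iff_add_eq', and_true]

theorem isCompletion_iff :
    IsCompletion K ν σ τ ↔
      σ = spokeWeight K ν τ ∧ 2 • τ = Fintype.card ι • K - ∑ u, ∑ w, ν u w := by
  have hsplit : IsCompletion K ν σ τ ↔ σ = spokeWeight K ν τ ∧ ∑ v, σ v = 0 := by
    simp only [eq_spokeWeight_iff, IsCompletion, and_assoc]
  rw [hsplit, and_congr_right_iff]
  rintro rfl
  rw [sum_spokeWeight, sub_eq_zero, eq_comm]

theorem existsUnique_isCompletion (h2 : Function.Bijective fun x : M => 2 • x) (K : M)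
    (ν : ι ⊕ Fin 3 → ι ⊕ Fin 3 → M) :
    ∃! p : (ι ⊕ Fin 3 → M) × M, IsCompletion K ν p.1 p.2 := by
  obtain ⟨τ, hτ⟩ := h2.surjective (Fintype.card ι • K - ∑ u, ∑ w, ν u w)
  refine ⟨(spokeWeight K ν τ, τ), isCompletion_iff.2 ⟨rfl, hτ⟩, ?_⟩
  rintro ⟨σ', τ'⟩ h
  obtain ⟨hσ', hτ'⟩ := isCompletion_iff.1 h
  obtain rfl : τ' = τ := h2.injective (hτ'.trans hτ.symm)
  exact Prod.ext hσ' rfl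

theorem sum_sum_mem_two_nsmul {V : Type*} (L : AddSubgroup M) {f : V → V → M}
    (hsym : ∀ u w, f u w = f w u) (hL : ∀ u w, f u w ∈ L) (hloop : ∀ u, f u u ∈ 2 • L)
    (s : Finset V) : ∑ u ∈ s, ∑ w ∈ s, f u w ∈ 2 • L := by
  classical
  induction s using Finset.induction_on with
  | empty => exact zero_mem _
  | insert a s ha ih =>
    have hstep : ∑ u ∈ insert a s, ∑ w ∈ insert a s, f u w =
        f a a + 2 • ∑ w ∈ s, f a w + ∑ u ∈ s, ∑ w ∈ s, f u w := by
      simp only [Finset.sum_insert ha, Finset.sum_add_distrib, hsym _ a]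
      abel
    rw [hstep]
    exact add_mem (add_mem (hloop a)
      (AddSubgroup.smul_mem_pointwise_smul _ 2 L (sum_mem fun w _ => hL a w))) ih

theorem spokeWeight_mem {L : AddSubgroup M} (hK : K ∈ L) (hL : ∀ u w, ν u w ∈ L) (hτ : τ ∈ L)
    (v : ι ⊕ Fin 3) : spokeWeight K ν τ v ∈ L := by
  have hdeg (u : ι ⊕ Fin 3) : ∑ w, ν u w ∈ L := sum_mem fun w _ => hL u w
  rcases v with i | j
  · exact sub_mem hK (hdeg _)
  · fin_cases j
    · exact sub_mem (neg_mem (hdeg _)) hτ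
    · exact sub_mem (neg_mem (hdeg _)) hτ
    · exact neg_mem (hdeg _)

theorem IsCompletion.mem_addSubgroup (h : IsCompletion K ν σ τ)
    (h2 : Function.Injective fun x : M => 2 • x) (hsym : ∀ u w, ν u w = ν w u)
    {L : AddSubgroup M} (hL : ∀ u w, ν u w ∈ L) (hloop : ∀ u, ν u u ∈ 2 • L) (hK : K ∈ 2 • L) :
    (∀ v, σ v ∈ L) ∧ τ ∈ L := by
  obtain ⟨rfl, htwo⟩ := isCompletion_iff.1 h
  have htwo_mem : 2 • τ ∈ 2 • L :=
    htwo ▸ sub_mem (nsmul_mem hK _) (sum_sum_mem_two_nsmul L hsym hL hloop Finset.univ)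
  have hτ : τ ∈ L := (AddSubgroup.mem_map_iff_mem h2).1 htwo_mem
  have hKL : K ∈ L := by
    obtain ⟨k, hk, rfl⟩ := hK
    exact nsmul_mem hk 2
  exact ⟨spokeWeight_mem hKL hL hτ, hτ⟩

theorem bijective_two_nsmul (k : Type*) [DivisionRing k] [NeZero (2 : k)] :
    Function.Bijective fun x : k => 2 • x := by
  simpa only [two_nsmul, two_mul] using mulLeft_bijective₀ (2 : k) two_ne_zero

theorem mem_zmultiples_inv_iff {k : Type*} [DivisionRing k] {b x : k} :
    x ∈ AddSubgroup.zmultiples b⁻¹ ↔ ∃ n : ℤ, x = n / b := by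
  simp only [AddSubgroup.mem_zmultiples_iff, zsmul_eq_mul, div_eq_mul_inv, eq_comm]

theorem two_mul_div_mem_two_nsmul_zmultiples_inv {k : Type*} [DivisionRing k] (m : ℤ) (b : k) :
    (2 * m : k) / b ∈ 2 • AddSubgroup.zmultiples b⁻¹ :=
  ⟨m / b, mem_zmultiples_inv_iff.2 ⟨m, rfl⟩, by simp [two_mul, add_div]⟩

end WeightedGraph

open WeightedGraph

open scoped Pointwise in
theorem completion_exists_unique_general {ι M : Type*} [Fintype ι] [AddCommGroup M]
    (h2 : Function.Bijective fun x : M => 2 • x) (K : M)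
    (ν : ι ⊕ Fin 3 → ι ⊕ Fin 3 → M) (hsym : ∀ u w, ν u w = ν w u) :
    (∃! p : (ι ⊕ Fin 3 → M) × M, IsCompletion K ν p.1 p.2) ∧
    ∀ L : AddSubgroup M, (∀ u w, ν u w ∈ L) → (∀ u, ν u u ∈ 2 • L) → K ∈ 2 • L →
      ∀ σ τ, IsCompletion K ν σ τ → (∀ v, σ v ∈ L) ∧ τ ∈ L :=
  ⟨existsUnique_isCompletion h2 K ν,
    fun _ hL hloop hK _ _ h => h.mem_addSubgroup h2.injective hsym hL hloop hK⟩

/-- Completion of a weighted graph with three external vertices `0, 1, z`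
(here `Sum.inr 0, Sum.inr 1, Sum.inr 2`) is always possible and unique: there
are unique weights `σ_v` for the new edges `v–∞` and a unique shift `τ` of the
weight of the edge `0–1` such that in the completed graph every internal
vertex has weighted degree `D/λ` and every external vertex (including `∞`) has
weighted degree `0`.  Moreover integer weights stay integer for `λ = 1` and
half-integer weights stay half-integer for `λ = 2`. -/
theorem completion_exists_unique
    (lam : ℝ) (hlam : 0 < lam) (D : ℝ) (hD : D = 2 * lam + 2)
    (ι : Type) [Fintype ι] [DecidableEq ι]
    (ν : (ι ⊕ Fin 3) → (ι ⊕ Fin 3) → ℝ)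
    (hsym : ∀ u w, ν u w = ν w u) (hdiag : ∀ u, ν u u = 0) :
    let Cond : ((ι ⊕ Fin 3) → ℝ) → ℝ → Prop := fun σ τ =>
      (∀ i : ι, (∑ w : ι ⊕ Fin 3, ν (Sum.inl i) w) + σ (Sum.inl i) = D / lam) ∧
      ((∑ w : ι ⊕ Fin 3, ν (Sum.inr 0) w) + τ + σ (Sum.inr 0) = 0) ∧
      ((∑ w : ι ⊕ Fin 3, ν (Sum.inr 1) w) + τ + σ (Sum.inr 1) = 0) ∧
      ((∑ w : ι ⊕ Fin 3, ν (Sum.inr 2) w) + σ (Sum.inr 2) = 0) ∧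
      (∑ v : ι ⊕ Fin 3, σ v = 0)
    (∃! p : ((ι ⊕ Fin 3) → ℝ) × ℝ, Cond p.1 p.2) ∧
    (lam = 1 → (∀ u w, ∃ n : ℤ, ν u w = n) →
      ∀ σ τ, Cond σ τ → (∀ v, ∃ n : ℤ, σ v = n) ∧ (∃ n : ℤ, τ = n)) ∧
    (lam = 2 → (∀ u w, ∃ n : ℤ, ν u w = n / 2) →
      ∀ σ τ, Cond σ τ → (∀ v, ∃ n : ℤ, σ v = n / 2) ∧ (∃ n : ℤ, τ = n / 2)) := by
  intro Cond
  obtain ⟨hunique, hmem⟩ :=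
    completion_exists_unique_general (bijective_two_nsmul ℝ) (D / lam) ν hsym
  have hlattice (m : ℤ) (hm : lam = m) (hν : ∀ u w, ∃ n : ℤ, ν u w = n / lam) (σ τ)
      (h : Cond σ τ) : (∀ v, ∃ n : ℤ, σ v = n / lam) ∧ ∃ n : ℤ, τ = n / lam := by
    simp only [← mem_zmultiples_inv_iff] at hν ⊢
    have hdegree : D / lam = 2 * (m + 1 : ℤ) / lam := by
      rw [hD, hm]; push_cast; ring
    exact hmem _ hν (fun u => hdiag u ▸ zero_mem _)
      (hdegree ▸ two_mul_div_mem_two_nsmul_zmultiples_inv (m + 1) lam) σ τ h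
  exact ⟨hunique, by rintro rfl; simpa using hlattice 1, by rintro rfl; simpa using hlattice 2⟩
end

section
/- Let D ≥ 1 be an integer and s a real number with 0 < s < D. Then for every Schwartz function φ : ℝ^D → ℂ, the functions x ↦ ‖x‖^{−s}·(𝓕φ)(x) and ξ ↦ ‖ξ‖^{s−D}·φ(ξ) are Lebesgue integrable on ℝ^D, and ∫_{ℝ^D} ‖x‖^{−s}·(𝓕φ)(x) dx = 2^{D−s}·π^{D/2}·(Γ((D−s)/2)/Γ(s/2))·∫_{ℝ^D} ‖ξ‖^{s−D}·φ(ξ) dξ, where (𝓕φ)(x) = ∫_{ℝ^D} e^{−i⟨x,ξ⟩} φ(ξ) dξ. Equivalently, the Fourier transform of the tempered distribution ‖x‖^{−s} is 2^{D−s}π^{D/2}(Γ((D−s)/2)/Γ(s/2))·‖ξ‖^{s−D}. -/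
open MeasureTheory RealInnerProductSpace

open Complex (Gammaℝ)
open Module (finrank)
open scoped FourierTransform Real ENNReal
open Set (Ioi)

/-!
For `Re s > 0` and `r > 0`, Euler's integral `Γ(s) r^{-s} = ∫₀^∞ t^{s-1} e^{-rt} dt` with
`r = π‖x‖²` writes `Γ_ℝ(s) ‖x‖^{-s}` as a Mellin superposition of Gaussians. The Fourier transform
exchanges the Gaussians of parameters `t` and `1/t`, up to the factor `t^{-d/2}`, so moving it from
one factor of a pairing to the other and substituting `t ↦ 1/t` in the Mellin transform yields the
symmetric identity
`Γ_ℝ(s) ∫ ‖x‖^{-s} 𝓕 f(x) dx = Γ_ℝ(d - s) ∫ ‖ξ‖^{s-d} f(ξ) dξ`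
for the unitary normalization `e^{-2πi⟨x,ξ⟩}` of `𝓕`. Rescaling the frequency by `2π` turns it into
the identity for the phase `e^{-i⟨x,ξ⟩}`.
-/

section LaplaceMellin

lemma integrableOn_cpow_mul_cexp_neg_mul_Ioi {s : ℂ} {r : ℝ} (hs : 0 < s.re) (hr : 0 < r) :
    IntegrableOn (fun t : ℝ => (t : ℂ) ^ (s - 1) * Complex.exp (-(r * t))) (Ioi 0) := by
  -- A non-integrable function has integral `0`, but this integral is a nonzero Gamma value.
  refine Integrable.of_integral_ne_zero ?_
  rw [Complex.integral_cpow_mul_exp_neg_mul_Ioi hs hr]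
  exact mul_ne_zero (by simp [Complex.cpow_eq_zero_iff, hr.ne'])
    (Complex.Gamma_ne_zero_of_re_pos hs)

lemma integral_cpow_mul_cexp_neg_mul_Ioi {s : ℂ} {r : ℝ} (hs : 0 < s.re) (hr : 0 < r) :
    ∫ t : ℝ in Ioi 0, (t : ℂ) ^ (s - 1) * Complex.exp (-(r * t))
      = Complex.Gamma s * (r : ℂ) ^ (-s) := by
  rw [Complex.integral_cpow_mul_exp_neg_mul_Ioi hs hr, one_div, Complex.inv_cpow, Complex.cpow_neg,
    mul_comm]
  simp [Complex.arg_ofReal_of_nonneg hr.le, Real.pi_ne_zero.symm]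

lemma integral_norm_cpow_mul_cexp_neg_mul_Ioi {s : ℂ} {r : ℝ} (hs : 0 < s.re) (hr : 0 < r) :
    ∫ t : ℝ in Ioi 0, ‖(t : ℂ) ^ (s - 1) * Complex.exp (-(r * t))‖
      = Real.Gamma s.re * ‖(r : ℂ) ^ (-s)‖ := by
  have h : ∀ t ∈ Ioi (0 : ℝ), ‖(t : ℂ) ^ (s - 1) * Complex.exp (-(r * t))‖
      = t ^ (s.re - 1) * Real.exp (-(r * t)) := fun t ht => by
    simp [Complex.norm_cpow_eq_rpow_re_of_pos ht, Complex.norm_exp]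
  rw [setIntegral_congr_fun measurableSet_Ioi h, Real.integral_rpow_mul_exp_neg_mul_Ioi hs hr,
    Complex.norm_cpow_eq_rpow_re_of_pos hr, Complex.neg_re, one_div, Real.inv_rpow hr.le,
    Real.rpow_neg hr.le, mul_comm]

variable {α E : Type*} [MeasurableSpace α] {μ : Measure α} [SFinite μ]
  [NormedAddCommGroup E] [NormedSpace ℂ E] {r : α → ℝ} {g : α → E} {s : ℂ}

lemma integrable_prod_cpow_mul_cexp_smul (hs : 0 < s.re) (hr_meas : AEMeasurable r μ)
    (hr_pos : ∀ᵐ x ∂μ, 0 < r x) (hg_meas : AEStronglyMeasurable g μ)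
    (hg : Integrable (fun x => (r x : ℂ) ^ (-s) • g x) μ) :
    Integrable (fun p : ℝ × α => ((p.1 : ℂ) ^ (s - 1) * Complex.exp (-(r p.2 * p.1))) • g p.2)
      ((volume.restrict (Ioi 0)).prod μ) := by
  have : AEMeasurable (fun p : ℝ × α => r p.2) ((volume.restrict (Ioi 0)).prod μ) :=
    hr_meas.comp_snd
  refine (integrable_prod_iff' ?_).2 ⟨?_, ?_⟩
  · exact (AEMeasurable.aestronglyMeasurable (by fun_prop)).smul hg_meas.comp_snd
  · filter_upwards [hr_pos] with x hx
    exact (integrableOn_cpow_mul_cexp_neg_mul_Ioi hs hx).smul_const (g x)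
  · refine (hg.norm.const_mul (Real.Gamma s.re)).congr ?_
    filter_upwards [hr_pos] with x hx
    simp only [norm_smul _ (g x)]
    rw [integral_mul_const, integral_norm_cpow_mul_cexp_neg_mul_Ioi hs hx, mul_assoc]

theorem mellin_integral_cexp_neg_mul_smul [CompleteSpace E] (hs : 0 < s.re)
    (hr_meas : AEMeasurable r μ) (hr_pos : ∀ᵐ x ∂μ, 0 < r x) (hg_meas : AEStronglyMeasurable g μ)
    (hg : Integrable (fun x => (r x : ℂ) ^ (-s) • g x) μ) :
    mellin (fun t => ∫ x, Complex.exp (-(r x * t)) • g x ∂μ) s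
      = Complex.Gamma s • ∫ x, (r x : ℂ) ^ (-s) • g x ∂μ := by
  calc mellin (fun t => ∫ x, Complex.exp (-(r x * t)) • g x ∂μ) s
    _ = ∫ t : ℝ in Ioi 0, ∫ x, ((t : ℂ) ^ (s - 1) * Complex.exp (-(r x * t))) • g x ∂μ := by
        simp only [mellin, mul_smul, integral_smul]
    _ = ∫ x, (∫ t : ℝ in Ioi 0, ((t : ℂ) ^ (s - 1) * Complex.exp (-(r x * t))) • g x) ∂μ :=
        integral_integral_swap
          (integrable_prod_cpow_mul_cexp_smul hs hr_meas hr_pos hg_meas hg)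
    _ = ∫ x, Complex.Gamma s • (r x : ℂ) ^ (-s) • g x ∂μ := by
        refine integral_congr_ae ?_
        filter_upwards [hr_pos] with x hx
        rw [integral_smul_const, integral_cpow_mul_cexp_neg_mul_Ioi hs hx, mul_smul]
    _ = Complex.Gamma s • ∫ x, (r x : ℂ) ^ (-s) • g x ∂μ := integral_smul _ _

end LaplaceMellin

section GaussianPairing

lemma ofReal_pi_mul_sq_cpow {y : ℝ} (hy : 0 ≤ y) (s : ℂ) :
    ((π * y ^ 2 : ℝ) : ℂ) ^ (-(s / 2)) = (π : ℂ) ^ (-s / 2) * (y : ℂ) ^ (-s) := by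
  have harg : (y : ℂ).arg = 0 := Complex.arg_ofReal_of_nonneg hy
  rw [Complex.ofReal_mul, Complex.mul_cpow_ofReal_nonneg Real.pi_nonneg (by positivity), neg_div,
    Complex.ofReal_pow, ← Complex.cpow_ofNat_mul' (by simp [harg, Real.pi_pos])
      (by simp [harg, Real.pi_nonneg])]
  congr 2
  ring

variable {V E : Type*} [NormedAddCommGroup V] [InnerProductSpace ℝ V] [FiniteDimensional ℝ V]
  [MeasurableSpace V] [BorelSpace V] [NormedAddCommGroup E] [NormedSpace ℂ E]

/-- The pairing `∫ e^{-πt‖x‖²} g(x) dx` of `g` with the Gaussian of parameter `t`, viewed as a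
function of `t`. -/
noncomputable def gaussianPairing (g : V → E) (t : ℝ) : E :=
  ∫ x, Complex.exp (-(π * ‖x‖ ^ 2 * t)) • g x

theorem mellin_gaussianPairing [Nontrivial V] [CompleteSpace E] {g : V → E} {s : ℂ} (hs : 0 < s.re)
    (hg_meas : AEStronglyMeasurable g) (hg : Integrable fun x => (‖x‖ : ℂ) ^ (-s) • g x) :
    mellin (gaussianPairing g) (s / 2) = Gammaℝ s • ∫ x, (‖x‖ : ℂ) ^ (-s) • g x := by
  have hpos : ∀ᵐ x : V, 0 < π * ‖x‖ ^ 2 := by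
    filter_upwards [Measure.ae_ne volume (0 : V)] with x hx
    positivity
  have hmellin := mellin_integral_cexp_neg_mul_smul (μ := volume) (r := fun x : V => π * ‖x‖ ^ 2)
    (g := g) (s := s / 2) (by simpa using hs) (by fun_prop) hpos hg_meas
  simp only [ofReal_pi_mul_sq_cpow (norm_nonneg _), mul_smul, integral_smul] at hmellin
  have hpairing : gaussianPairing g
      = fun t : ℝ => ∫ x, Complex.exp (-((π * ‖x‖ ^ 2 : ℝ) * t)) • g x := by
    ext t
    simp [gaussianPairing]
  rw [hpairing, hmellin (hg.smul ((π : ℂ) ^ (-s / 2))), Complex.Gammaℝ_def, mul_comm, mul_smul]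

lemma integrable_cexp_neg_pi_mul_sq_norm {t : ℝ} (ht : 0 < t) :
    Integrable fun x : V => Complex.exp (-(π * ‖x‖ ^ 2 * t)) := by
  have hre : 0 < (π * t : ℂ).re := by simpa using mul_pos Real.pi_pos ht
  simpa [mul_right_comm] using
    GaussianFourier.integrable_cexp_neg_mul_sq_norm_add hre 0 (0 : V)

lemma fourier_cexp_neg_pi_mul_sq_norm {t : ℝ} (ht : 0 < t) (ξ : V) :
    𝓕 (fun x : V => Complex.exp (-(π * ‖x‖ ^ 2 * t))) ξ
      = (t : ℂ) ^ (-(finrank ℝ V / 2) : ℂ) * Complex.exp (-(π * ‖ξ‖ ^ 2 * (t⁻¹ : ℝ))) := by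
  have hre : 0 < (π * t : ℂ).re := by simpa using mul_pos Real.pi_pos ht
  have hπ : (π : ℂ) ≠ 0 := Complex.ofReal_ne_zero.2 Real.pi_ne_zero
  have ht' : (t : ℂ) ≠ 0 := Complex.ofReal_ne_zero.2 ht.ne'
  have hconst : (π / (π * t) : ℂ) ^ (finrank ℝ V / 2 : ℂ)
      = (t : ℂ) ^ (-(finrank ℝ V / 2) : ℂ) := by
    rw [div_mul_cancel_left₀ hπ, Complex.inv_cpow, Complex.cpow_neg]
    simp [Complex.arg_ofReal_of_nonneg ht.le, Real.pi_ne_zero.symm]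
  have hexp : -(π : ℂ) ^ 2 * ‖ξ‖ ^ 2 / (π * t) = -(π * ‖ξ‖ ^ 2 * (t⁻¹ : ℝ)) := by
    push_cast
    field_simp
  rw [← hconst, ← hexp, ← fourier_gaussian_innerProductSpace hre]
  simp only [neg_mul, mul_right_comm]

theorem gaussianPairing_fourier [CompleteSpace E] {f : V → E} (hf : Integrable f) {t : ℝ}
    (ht : 0 < t) :
    gaussianPairing (𝓕 f) t = (t : ℂ) ^ (-(finrank ℝ V / 2) : ℂ) • gaussianPairing f t⁻¹ := by
  have hadjoint := VectorFourier.integral_fourierIntegral_smul_eq_flip (L := innerₗ V)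
    Real.continuous_fourierChar continuous_inner (integrable_cexp_neg_pi_mul_sq_norm ht) hf
  rw [flip_innerₗ] at hadjoint
  calc gaussianPairing (𝓕 f) t
    _ = ∫ ξ, 𝓕 (fun x : V => Complex.exp (-(π * ‖x‖ ^ 2 * t))) ξ • f ξ := hadjoint.symm
    _ = (t : ℂ) ^ (-(finrank ℝ V / 2) : ℂ) • gaussianPairing f t⁻¹ := by
        simp only [fourier_cexp_neg_pi_mul_sq_norm ht, mul_smul, integral_smul, gaussianPairing]

lemma memLp_top_fourier {f : V → E} (hf : Integrable f) : MemLp (𝓕 f) ∞ :=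
  memLp_top_of_bound (VectorFourier.fourierIntegral_continuous Real.continuous_fourierChar
    continuous_inner hf).aestronglyMeasurable (∫ ξ, ‖f ξ‖)
    (.of_forall fun _ => VectorFourier.norm_fourierIntegral_le_integral_norm _ _ _ _ _)

theorem Gammaℝ_smul_integral_norm_cpow_smul_fourier [CompleteSpace E] {f : V → E} {s : ℂ}
    (hs : 0 < s.re) (hs' : s.re < finrank ℝ V) (hf : Integrable f)
    (hf_weight : Integrable fun ξ => (‖ξ‖ : ℂ) ^ (s - finrank ℝ V) • f ξ)
    (hFf_weight : Integrable fun x => (‖x‖ : ℂ) ^ (-s) • 𝓕 f x) :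
    Gammaℝ s • ∫ x, (‖x‖ : ℂ) ^ (-s) • 𝓕 f x
      = Gammaℝ (finrank ℝ V - s) • ∫ ξ, (‖ξ‖ : ℂ) ^ (s - finrank ℝ V) • f ξ := by
  have : Nontrivial V := Module.nontrivial_of_finrank_pos (R := ℝ) (mod_cast hs.trans hs')
  calc Gammaℝ s • ∫ x, (‖x‖ : ℂ) ^ (-s) • 𝓕 f x
    _ = mellin (gaussianPairing (𝓕 f)) (s / 2) :=
        (mellin_gaussianPairing hs (memLp_top_fourier hf).aestronglyMeasurable hFf_weight).symm
    _ = mellin (fun t => (t : ℂ) ^ (-(finrank ℝ V / 2) : ℂ) • gaussianPairing f t⁻¹) (s / 2) :=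
        setIntegral_congr_fun measurableSet_Ioi fun t ht => by
          simp only [gaussianPairing_fourier hf ht]
    _ = mellin (gaussianPairing f) ((finrank ℝ V - s) / 2) := by
        rw [mellin_cpow_smul, mellin_comp_inv]
        congr 1
        ring
    _ = Gammaℝ (finrank ℝ V - s) • ∫ ξ, (‖ξ‖ : ℂ) ^ (s - finrank ℝ V) • f ξ := by
        rw [← neg_sub (finrank ℝ V : ℂ) s] at hf_weight ⊢
        exact mellin_gaussianPairing (by simpa using hs') hf.aestronglyMeasurable hf_weight

end GaussianPairing

section Integrability

lemma norm_ofReal_cpow_neg_le_one {y : ℝ} {s : ℂ} (hy : 1 ≤ y) (hs : 0 ≤ s.re) :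
    ‖(y : ℂ) ^ (-s)‖ ≤ 1 := by
  rw [Complex.norm_cpow_eq_rpow_re_of_pos (zero_lt_one.trans_le hy)]
  exact Real.rpow_le_one_of_one_le_of_nonpos hy (by simpa using hs)

variable {V E : Type*} [NormedAddCommGroup V] [NormedSpace ℝ V] [FiniteDimensional ℝ V]
  [MeasurableSpace V] [BorelSpace V] [NormedAddCommGroup E] [NormedSpace ℂ E] {μ : Measure V}
  [μ.IsAddHaarMeasure] {s : ℂ}

lemma integrableOn_ball_norm_cpow (hV : 1 ≤ finrank ℝ V) (hs : s.re < finrank ℝ V) :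
    IntegrableOn (fun x : V => (‖x‖ : ℂ) ^ (-s)) (Metric.ball 0 1) μ := by
  have : Nontrivial V := Module.nontrivial_of_finrank_pos (R := ℝ) hV
  refine integrableOn_ball_of_norm_le_rpow hV hs (C := 1) (ae_restrict_of_ae ?_)
    (Measurable.aestronglyMeasurable (by fun_prop))
  filter_upwards [Measure.ae_ne μ (0 : V)] with x hx
  rw [Complex.norm_cpow_eq_rpow_re_of_pos (norm_pos_iff.2 hx), Complex.neg_re, one_mul]

theorem integrable_norm_cpow_smul (hs : 0 ≤ s.re) (hs' : s.re < finrank ℝ V) {f : V → E}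
    (hf : Integrable f μ) (hf_bdd : MemLp f ∞ μ) :
    Integrable (fun x => (‖x‖ : ℂ) ^ (-s) • f x) μ := by
  have hV : 0 < finrank ℝ V := mod_cast hs.trans_lt hs'
  rw [← integrableOn_univ, ← Set.union_compl_self (Metric.ball (0 : V) 1)]
  refine IntegrableOn.union ?_ ?_
  · exact (integrableOn_ball_norm_cpow hV hs').smul_of_top_left (hf_bdd.restrict _)
  · refine hf.restrict.bdd_smul 1 (Measurable.aestronglyMeasurable (by fun_prop)) ?_
    filter_upwards [ae_restrict_mem measurableSet_ball.compl] with x hx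
    exact norm_ofReal_cpow_neg_le_one (by simpa using hx) hs

end Integrability

section AngularFourier

variable {V E : Type*} [NormedAddCommGroup V] [InnerProductSpace ℝ V] [FiniteDimensional ℝ V]
  [MeasurableSpace V] [BorelSpace V] [NormedAddCommGroup E] [NormedSpace ℂ E]

/-- The Fourier transform `x ↦ ∫ e^{-i⟨x,ξ⟩} f(ξ) dξ` in the angular-frequency normalization;
Mathlib's `𝓕` has the phase `e^{-2πi⟨x,ξ⟩}` instead. -/
noncomputable def angularFourier (f : V → E) (x : V) : E :=
  ∫ ξ, Complex.exp (-Complex.I * ((⟪x, ξ⟫ : ℝ) : ℂ)) • f ξ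

lemma angularFourier_eq_fourier (f : V → E) (x : V) :
    angularFourier f x = 𝓕 f ((2 * π)⁻¹ • x) := by
  have hπ : (π : ℂ) ≠ 0 := Complex.ofReal_ne_zero.2 Real.pi_ne_zero
  rw [Real.fourier_eq', angularFourier]
  congr! 4 with ξ
  rw [inner_smul_right, real_inner_comm]
  push_cast
  field_simp

lemma integrable_angularFourier_iff {f : V → E} :
    Integrable (angularFourier f) ↔ Integrable (𝓕 f) := by
  rw [funext (angularFourier_eq_fourier f)]
  exact integrable_comp_smul_iff volume (𝓕 f) (inv_ne_zero Real.two_pi_pos.ne')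

lemma norm_cpow_smul_angularFourier (f : V → E) (s : ℂ) (x : V) :
    (‖x‖ : ℂ) ^ (-s) • angularFourier f x = (2 * π : ℂ) ^ (-s) •
      (‖(2 * π)⁻¹ • x‖ : ℂ) ^ (-s) • 𝓕 f ((2 * π)⁻¹ • x) := by
  have hx : (‖x‖ : ℂ) = (2 * π : ℝ) * (‖(2 * π)⁻¹ • x‖ : ℝ) := by
    rw [← Complex.ofReal_mul, norm_smul_of_nonneg (by positivity),
      mul_inv_cancel_left₀ Real.two_pi_pos.ne']
  rw [hx, Complex.mul_cpow_ofReal_nonneg Real.two_pi_pos.le (norm_nonneg _), mul_smul,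
    angularFourier_eq_fourier]
  push_cast
  rfl

lemma integrable_norm_cpow_smul_angularFourier {f : V → E} {s : ℂ}
    (h : Integrable fun x => (‖x‖ : ℂ) ^ (-s) • 𝓕 f x) :
    Integrable fun x => (‖x‖ : ℂ) ^ (-s) • angularFourier f x := by
  simp only [norm_cpow_smul_angularFourier]
  exact (h.comp_smul (inv_ne_zero Real.two_pi_pos.ne')).smul ((2 * π : ℂ) ^ (-s))

lemma integral_norm_cpow_smul_angularFourier (f : V → E) (s : ℂ) :
    ∫ x, (‖x‖ : ℂ) ^ (-s) • angularFourier f x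
      = (2 * π : ℂ) ^ (finrank ℝ V - s) • ∫ x, (‖x‖ : ℂ) ^ (-s) • 𝓕 f x := by
  have h2π : (2 * π : ℂ) ≠ 0 := mod_cast Real.two_pi_pos.ne'
  simp only [norm_cpow_smul_angularFourier]
  rw [integral_smul, Measure.integral_comp_inv_smul_of_nonneg volume
    (fun y : V => (‖y‖ : ℂ) ^ (-s) • 𝓕 f y) Real.two_pi_pos.le, ← Complex.coe_smul, smul_smul,
    sub_eq_neg_add, Complex.cpow_add _ _ h2π, Complex.cpow_natCast]
  push_cast
  rfl

end AngularFourier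

lemma cpow_mul_Gammaℝ_div_Gammaℝ (d s : ℂ) :
    (2 * π : ℂ) ^ (d - s) * (Gammaℝ (d - s) / Gammaℝ s)
      = 2 ^ (d - s) * π ^ (d / 2) * (Complex.Gamma ((d - s) / 2) / Complex.Gamma (s / 2)) := by
  have hπ : (π : ℂ) ≠ 0 := Complex.ofReal_ne_zero.2 Real.pi_ne_zero
  have h2π : (2 * π : ℂ) ^ (d - s) = 2 ^ (d - s) * π ^ (d - s) := by
    simpa using Complex.mul_cpow_ofReal_nonneg zero_le_two Real.pi_nonneg (d - s)
  have hexp : (π : ℂ) ^ (d - s) * (π ^ (-(d - s) / 2) / π ^ (-s / 2)) = π ^ (d / 2) := by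
    rw [← Complex.cpow_sub _ _ hπ, ← Complex.cpow_add _ _ hπ]
    congr 1
    ring
  rw [Complex.Gammaℝ_def, Complex.Gammaℝ_def, h2π, ← hexp]
  ring

theorem fourier_transform_of_riesz_potential_general {V E : Type*} [NormedAddCommGroup V]
    [InnerProductSpace ℝ V] [FiniteDimensional ℝ V] [MeasurableSpace V] [BorelSpace V]
    [NormedAddCommGroup E] [NormedSpace ℂ E] [CompleteSpace E] {s : ℂ} (hs : 0 < s.re)
    (hs' : s.re < finrank ℝ V) {f : V → E} (hf : Integrable f) (hf_bdd : MemLp f ∞)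
    (hFf : Integrable (angularFourier f)) :
    Integrable (fun x => (‖x‖ : ℂ) ^ (-s) • angularFourier f x) ∧
    Integrable (fun ξ => (‖ξ‖ : ℂ) ^ (s - finrank ℝ V) • f ξ) ∧
    ∫ x, (‖x‖ : ℂ) ^ (-s) • angularFourier f x
      = (2 ^ (finrank ℝ V - s) * π ^ (finrank ℝ V / 2 : ℂ) *
          (Complex.Gamma ((finrank ℝ V - s) / 2) / Complex.Gamma (s / 2))) •
        ∫ ξ, (‖ξ‖ : ℂ) ^ (s - finrank ℝ V) • f ξ := by
  have hFf_weight := integrable_norm_cpow_smul hs.le hs' (integrable_angularFourier_iff.1 hFf)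
    (memLp_top_fourier hf)
  have hf_weight : Integrable fun ξ => (‖ξ‖ : ℂ) ^ (s - finrank ℝ V) • f ξ := by
    simpa using integrable_norm_cpow_smul (s := finrank ℝ V - s) (by simpa using hs'.le)
      (by simpa using hs) hf hf_bdd
  refine ⟨integrable_norm_cpow_smul_angularFourier hFf_weight, hf_weight, ?_⟩
  rw [integral_norm_cpow_smul_angularFourier, ← cpow_mul_Gammaℝ_div_Gammaℝ, mul_smul,
    div_eq_inv_mul, mul_smul, ← Gammaℝ_smul_integral_norm_cpow_smul_fourier hs hs' hf hf_weight
      hFf_weight, inv_smul_smul₀ (Complex.Gammaℝ_ne_zero_of_re_pos hs)]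

/-- The Fourier transform of the tempered distribution `‖x‖^{−s}` is
`2^{D−s} π^{D/2} (Γ((D−s)/2)/Γ(s/2)) ‖ξ‖^{s−D}`, tested against a Schwartz
function `φ` with `(𝓕φ)(x) = ∫ e^{−i⟨x,ξ⟩} φ(ξ) dξ`. -/
theorem fourier_transform_of_riesz_potential
    (D : ℕ) (hD : 1 ≤ D) (s : ℝ) (hs0 : 0 < s) (hsD : s < D)
    (φ : SchwartzMap (EuclideanSpace ℝ (Fin D)) ℂ) :
    let Fφ : EuclideanSpace ℝ (Fin D) → ℂ := fun x =>
      ∫ ξ : EuclideanSpace ℝ (Fin D),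
        Complex.exp (-Complex.I * ((⟪x, ξ⟫ : ℝ) : ℂ)) * φ ξ
    Integrable (fun x : EuclideanSpace ℝ (Fin D) => ((‖x‖ ^ (-s) : ℝ) : ℂ) * Fφ x) ∧
    Integrable (fun ξ : EuclideanSpace ℝ (Fin D) =>
      ((‖ξ‖ ^ (s - (D : ℝ)) : ℝ) : ℂ) * φ ξ) ∧
    (∫ x : EuclideanSpace ℝ (Fin D), ((‖x‖ ^ (-s) : ℝ) : ℂ) * Fφ x)
      = (((2 : ℝ) ^ ((D : ℝ) - s) * Real.pi ^ ((D : ℝ) / 2) *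
            (Real.Gamma (((D : ℝ) - s) / 2) / Real.Gamma (s / 2)) : ℝ) : ℂ) *
          ∫ ξ : EuclideanSpace ℝ (Fin D), ((‖ξ‖ ^ (s - (D : ℝ)) : ℝ) : ℂ) * φ ξ := by
  simpa [angularFourier, Complex.ofReal_cpow, Real.pi_nonneg, ← Complex.Gamma_ofReal] using
    fourier_transform_of_riesz_potential_general (s := s) (by simpa) (by simpa) φ.integrable
      (φ.memLp ∞) (integrable_angularFourier_iff.2 (𝓕 φ).integrable)
end
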